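/- For every integer k ≥ 0: b_k − v_{k−ℓ} + b_{k−ℓ+1} − v_{k−ℓ+1} ≤ b^φ_k ≤ m_k − r_{k−ℓ} + m_{k−ℓ+1} − r_{k−ℓ+1}. -/

import Mathlib

open LinearMap Module

noncomputable section

namespace ConeMorse

variable (A : ℤ → Type) [∀ i, AddCommGroup (A i)] [∀ i, Module ℝ (A i)]

/-- Transport along an equality of indices. -/
def lcast {m k : ℤ} (h : m = k) : A m →ₗ[ℝ] A k where
  toFun x := h ▸ x
  map_add' x y := by subst h; rfl
  map_smul' c x := by subst h; rfl

variable (d : ∀ i, A i →ₗ[ℝ] A (i + 1))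

/-- Cocycles in degree `i`. -/
def cocycles (i : ℤ) : Submodule ℝ (A i) := ker (d i)

/-- Coboundaries in degree `i`: the image of `d : A^{i-1} → A^i`. -/
def cobound (i : ℤ) : Submodule ℝ (A i) :=
  range ((lcast A (show i - 1 + 1 = i by ring)).comp (d (i - 1)))

/-- Cohomology in degree `i`: cocycles modulo coboundaries. -/
abbrev Hcoh (i : ℤ) :=
  cocycles A d i ⧸ Submodule.comap (cocycles A d i).subtype (cobound A d i)

section OneComplex

variable (ℓ : ℤ) (φ : ∀ i, A i →ₗ[ℝ] A (i + ℓ))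

/-- The cone differential `∂_C (a, b) = (∂ a + φ b, (−1)^{ℓ−1} ∂ b)` on
`Cone^i(φ) = A^i ⊕ A^{i−ℓ+1}`. -/
def coneD (i : ℤ) : (A i × A (i - ℓ + 1)) →ₗ[ℝ] (A (i + 1) × A (i + 1 - ℓ + 1)) :=
  LinearMap.prod
    ((d i).comp (LinearMap.fst ℝ (A i) (A (i - ℓ + 1))) +
      (lcast A (show i - ℓ + 1 + ℓ = i + 1 by ring)).comp
        ((φ (i - ℓ + 1)).comp (LinearMap.snd ℝ (A i) (A (i - ℓ + 1)))))
    (((-1 : ℝ) ^ (ℓ - 1)) •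
      ((lcast A (show i - ℓ + 1 + 1 = i + 1 - ℓ + 1 by ring)).comp
        ((d (i - ℓ + 1)).comp (LinearMap.snd ℝ (A i) (A (i - ℓ + 1))))))

variable [∀ i, FiniteDimensional ℝ (A i)]

/-- `m_k`: the dimension of the cochain group in degree `k`. -/
def mnum (k : ℤ) : ℕ := finrank ℝ (A k)

/-- `b_k`: the dimension of the cohomology in degree `k`. -/
def bnum (k : ℤ) : ℕ := finrank ℝ (Hcoh A d k)

/-- `v_k`: the rank of `φ : A^k → A^{k+ℓ}`. -/
def vnum (k : ℤ) : ℕ := finrank ℝ (range (φ k))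

/-- `r_k`: the rank of the induced map `[φ] : H^k → H^{k+ℓ}`, computed as the dimension of
`φ(Z^k)/(φ(Z^k) ∩ B^{k+ℓ})`. -/
def rnum (k : ℤ) : ℕ :=
  finrank ℝ ((Submodule.map (φ k) (cocycles A d k)) ⧸
    Submodule.comap (Submodule.map (φ k) (cocycles A d k)).subtype (cobound A d (k + ℓ)))

/-- `b^φ_k`: the dimension of the cone cohomology in degree `k`. -/
def bphi (k : ℤ) : ℕ :=
  finrank ℝ (Hcoh (fun i => A i × A (i - ℓ + 1)) (coneD A d ℓ φ) k)

end OneComplex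

end ConeMorse

open ConeMorse

section Helpers

theorem abs_ker {A B A' B' : Type} [AddCommGroup A] [Module ℝ A] [AddCommGroup B] [Module ℝ B]
    [AddCommGroup A'] [Module ℝ A'] [AddCommGroup B'] [Module ℝ B']
    [FiniteDimensional ℝ A] [FiniteDimensional ℝ B]
    (d : A →ₗ[ℝ] A') (f : B →ₗ[ℝ] A') (e : B →ₗ[ℝ] B') (K : Submodule ℝ (A × B))
    (hK : ∀ a b, (a, b) ∈ K ↔ d a + f b = 0 ∧ e b = 0) :
    finrank ℝ K + finrank ℝ ((Submodule.map f (ker e)) ⧸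
      Submodule.comap (Submodule.map f (ker e)).subtype (range d)) =
      finrank ℝ (ker d) + finrank ℝ (ker e) := by
  let q : ker e →ₗ[ℝ] ((Submodule.map f (ker e)) ⧸
      Submodule.comap (Submodule.map f (ker e)).subtype (range d)) :=
    (Submodule.mkQ _).comp (f.submoduleMap (ker e))
  have hq : Function.Surjective q :=
    (Submodule.mkQ_surjective _).comp (f.submoduleMap_surjective (ker e))
  have hqk : ∀ x : ker e, x ∈ ker q ↔ ∃ a, d a = f x := by
    intro x
    simp [q, LinearMap.mem_ker]
  let p : K →ₗ[ℝ] ker e := LinearMap.codRestrict (ker e)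
    ((LinearMap.snd ℝ A B).comp K.subtype) (by
      rintro ⟨⟨a, b⟩, h⟩
      exact ((hK a b).1 h).2)
  have hp : ∀ x : K, ((p x : ker e) : B) = x.1.2 := fun x => rfl
  have hr : range p = ker q := by
    ext x
    rw [hqk, LinearMap.mem_range]
    constructor
    · rintro ⟨⟨⟨a, b⟩, h⟩, rfl⟩
      refine ⟨-a, ?_⟩
      have := ((hK a b).1 h).1
      rw [map_neg]
      exact neg_eq_of_add_eq_zero_right this
    · rintro ⟨a, ha⟩
      refine ⟨⟨(-a, x.1), (hK _ _).2 ⟨?_, x.2⟩⟩, ?_⟩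
      · rw [map_neg, ha]; simp
      · ext; rfl
  let g : ker d →ₗ[ℝ] K := LinearMap.codRestrict K
    ((LinearMap.inl ℝ A B).comp (ker d).subtype) (by
      rintro ⟨a, h⟩
      have h' : d a = 0 := h
      exact (hK _ _).2 (by simp [h']))
  have hg : Function.Injective g := by
    rintro ⟨x, hx⟩ ⟨y, hy⟩ h
    have := congrArg (fun z : K => z.1.1) h
    exact Subtype.ext this
  have hgr : range g = ker p := by
    ext x
    rw [LinearMap.mem_range, LinearMap.mem_ker]
    constructor
    · rintro ⟨a, rfl⟩
      ext; rfl
    · intro h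
      obtain ⟨⟨a, b⟩, hx⟩ := x
      have hb : b = 0 := congrArg Subtype.val h
      subst hb
      refine ⟨⟨a, ?_⟩, rfl⟩
      have := ((hK _ _).1 hx).1
      simpa using this
  have e1 := LinearMap.finrank_range_add_finrank_ker p
  have e2 := LinearMap.finrank_range_add_finrank_ker q
  have e3 := LinearMap.finrank_range_of_inj hg
  rw [LinearMap.range_eq_top.2 hq, finrank_top] at e2
  rw [hr] at e1
  rw [hgr] at e3
  omega

variable (A : ℤ → Type) [∀ i, AddCommGroup (A i)] [∀ i, Module ℝ (A i)]

theorem lcast_rfl' {m : ℤ} (h : m = m) (x : A m) : lcast A h x = x := rfl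

theorem lcast_lcast {m k j : ℤ} (h : m = k) (h' : k = j) (x : A m) :
    lcast A h' (lcast A h x) = lcast A (h.trans h') x := by
  subst h; subst h'; rfl

theorem lcast_inj {m k : ℤ} (h : m = k) : Function.Injective (lcast A h) := by
  subst h; exact fun x y h => h

theorem d_lcast (t : ℤ) (d : ∀ i, A i →ₗ[ℝ] A (i + t)) {m k : ℤ} (h : m = k) (x : A m) :
    d k (lcast A h x) = lcast A (by rw [h]) (d m x) := by
  subst h; rfl

variable (d : ∀ i, A i →ₗ[ℝ] A (i + 1))

theorem cobound_succ (i : ℤ) : cobound A d (i + 1) = range (d i) := by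
  have : ∀ j (h : j = i) (h' : j + 1 = i + 1),
      range ((lcast A h').comp (d j)) = range (d i) := by
    intro j h h'
    subst h; rfl
  exact this _ (by ring) _

theorem cobound_le (hd : ∀ i x, d (i + 1) (d i x) = 0) (k : ℤ) :
    cobound A d k ≤ cocycles A d k := by
  obtain ⟨i, rfl⟩ : ∃ i, k = i + 1 := ⟨k - 1, by ring⟩
  rw [cobound_succ]
  rintro _ ⟨x, rfl⟩
  exact hd i x

theorem finrank_Hcoh [∀ i, FiniteDimensional ℝ (A i)]
    (hd : ∀ i x, d (i + 1) (d i x) = 0) (k : ℤ) :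
    finrank ℝ (Hcoh A d k) + finrank ℝ (A (k - 1)) =
      finrank ℝ (cocycles A d k) + finrank ℝ (cocycles A d (k - 1)) := by
  have e1 := Submodule.finrank_quotient_add_finrank
    (Submodule.comap (cocycles A d k).subtype (cobound A d k))
  have e2 := (Submodule.comapSubtypeEquivOfLe (cobound_le A d hd k)).finrank_eq
  obtain ⟨i, rfl⟩ : ∃ i, k = i + 1 := ⟨k - 1, by ring⟩
  have e3 := LinearMap.finrank_range_add_finrank_ker (d (i + 1 - 1))
  have e4 : finrank ℝ (range (d (i + 1 - 1))) = finrank ℝ (cobound A d (i + 1)) := by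
    have : i + 1 - 1 = i := by ring
    rw [cobound_succ, this]
  unfold Hcoh
  change _ + finrank ℝ (cocycles A d (i + 1 - 1)) = _ at e3
  omega

variable (ℓ : ℤ) (φ : ∀ i, A i →ₗ[ℝ] A (i + ℓ))

theorem coneD_apply (i : ℤ) (a : A i) (b : A (i - ℓ + 1)) :
    coneD A d ℓ φ i (a, b) =
      (d i a + lcast A (show i - ℓ + 1 + ℓ = i + 1 by ring) (φ _ b),
        ((-1 : ℝ) ^ (ℓ - 1)) •
          lcast A (show i - ℓ + 1 + 1 = i + 1 - ℓ + 1 by ring) (d _ b)) := rfl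

theorem cone_sq (hd : ∀ i x, d (i + 1) (d i x) = 0)
    (hφ : ∀ i x, d (i + ℓ) (φ i x) =
      ((-1 : ℝ) ^ ℓ) • (lcast A (show i + 1 + ℓ = i + ℓ + 1 by ring) (φ (i + 1) (d i x))))
    (i : ℤ) (x : A i × A (i - ℓ + 1)) :
    coneD A d ℓ φ (i + 1) (coneD A d ℓ φ i x) = 0 := by
  obtain ⟨a, b⟩ := x
  rw [coneD_apply, coneD_apply]
  have hs : ((-1 : ℝ) ^ ℓ) = - ((-1 : ℝ) ^ (ℓ - 1)) := by
    rw [zpow_sub_one₀ (by norm_num)]; norm_num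
  refine Prod.ext ?_ ?_
  · simp only [map_add, map_smul, hd, d_lcast A 1 d, d_lcast A ℓ φ, lcast_lcast, hφ, hs]
    simp
  · simp only [map_smul, d_lcast A 1 d, hd, map_zero, smul_zero]
    rfl

theorem cone_ker [∀ i, FiniteDimensional ℝ (A i)] (i : ℤ) :
    finrank ℝ (cocycles (fun i => A i × A (i - ℓ + 1)) (coneD A d ℓ φ) i)
      + rnum A d ℓ φ (i - ℓ + 1) =
    finrank ℝ (cocycles A d i) + finrank ℝ (cocycles A d (i - ℓ + 1)) := by
  have key : ∀ m (h : m = i + 1) (ψ : A (i - ℓ + 1) →ₗ[ℝ] A m),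
      finrank ℝ ((Submodule.map ψ (cocycles A d (i - ℓ + 1))) ⧸
        Submodule.comap (Submodule.map ψ (cocycles A d (i - ℓ + 1))).subtype (cobound A d m)) =
      finrank ℝ ((Submodule.map ((lcast A h).comp ψ) (ker (d (i - ℓ + 1)))) ⧸
        Submodule.comap (Submodule.map ((lcast A h).comp ψ) (ker (d (i - ℓ + 1)))).subtype
          (range (d i))) := by
    intro m h ψ
    subst h
    rw [cobound_succ]
    rfl
  unfold rnum
  rw [key _ (by ring) (φ (i - ℓ + 1))]
  refine abs_ker (d i) _ (d (i - ℓ + 1)) _ ?_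
  intro a b
  change coneD A d ℓ φ i (a, b) = 0 ↔ _
  rw [coneD_apply, Prod.mk_eq_zero]
  refine and_congr Iff.rfl ?_
  rw [smul_eq_zero_iff_right (zpow_ne_zero _ (by norm_num))]
  exact map_eq_zero_iff _ (lcast_inj A _)

theorem rnum_le [∀ i, FiniteDimensional ℝ (A i)] (i : ℤ) :
    rnum A d ℓ φ i ≤ vnum A ℓ φ i :=
  (Submodule.finrank_quotient_le _).trans (Submodule.finrank_mono (LinearMap.map_le_range))

theorem bnum_le [∀ i, FiniteDimensional ℝ (A i)] (i : ℤ) :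
    bnum A d i ≤ mnum A i :=
  (Submodule.finrank_quotient_le _).trans (Submodule.finrank_le _)

end Helpers

/-- STATEMENT 9: for every integer `k ≥ 0`,
`b_k − v_{k−ℓ} + b_{k−ℓ+1} − v_{k−ℓ+1} ≤ b^φ_k ≤ m_k − r_{k−ℓ} + m_{k−ℓ+1} − r_{k−ℓ+1}`. -/
theorem cone_cohomology_two_sided_bound
    (n ℓ : ℤ) (hn : 0 ≤ n) (hℓ : 1 ≤ ℓ)
    (C : ℤ → Type) [∀ i, AddCommGroup (C i)] [∀ i, Module ℝ (C i)]
    [∀ i, FiniteDimensional ℝ (C i)]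
    (hC : ∀ i, i < 0 ∨ n < i → Subsingleton (C i))
    (d : ∀ i, C i →ₗ[ℝ] C (i + 1))
    (hd : ∀ i, (d (i + 1)).comp (d i) = 0)
    (φ : ∀ i, C i →ₗ[ℝ] C (i + ℓ))
    (hφ : ∀ i, (d (i + ℓ)).comp (φ i) =
      ((-1 : ℝ) ^ ℓ) • (lcast C (show i + 1 + ℓ = i + ℓ + 1 by ring)).comp
        ((φ (i + 1)).comp (d i))) :
    ∀ k : ℤ, 0 ≤ k →
      (bnum C d k : ℤ) - vnum C ℓ φ (k - ℓ) + bnum C d (k - ℓ + 1) - vnum C ℓ φ (k - ℓ + 1) ≤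
          (bphi C d ℓ φ k : ℤ) ∧
        (bphi C d ℓ φ k : ℤ) ≤
          (mnum C k : ℤ) - rnum C d ℓ φ (k - ℓ) + mnum C (k - ℓ + 1) -
            rnum C d ℓ φ (k - ℓ + 1) := by
  intro k _
  have hd' : ∀ i x, d (i + 1) (d i x) = 0 := fun i x => LinearMap.congr_fun (hd i) x
  have hφ' : ∀ i x, d (i + ℓ) (φ i x) =
      ((-1 : ℝ) ^ ℓ) • (lcast C (show i + 1 + ℓ = i + ℓ + 1 by ring) (φ (i + 1) (d i x))) :=
    fun i x => LinearMap.congr_fun (hφ i) x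
  have a1 := finrank_Hcoh C d hd' k
  have a2 := finrank_Hcoh C d hd' (k - ℓ + 1)
  have a3 := finrank_Hcoh (fun i => C i × C (i - ℓ + 1)) (coneD C d ℓ φ)
    (cone_sq C d ℓ φ hd' hφ') k
  have a4 := cone_ker C d ℓ φ k
  have a5 := cone_ker C d ℓ φ (k - 1)
  rw [Module.finrank_prod] at a3
  have i1 : k - ℓ + 1 - 1 = k - ℓ := by ring
  have i2 : k - 1 - ℓ + 1 = k - ℓ := by ring
  rw [i1] at a2
  have j1 : finrank ℝ (C (k - 1 - ℓ + 1)) = finrank ℝ (C (k - ℓ)) := by rw [i2]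
  have j2 : rnum C d ℓ φ (k - 1 - ℓ + 1) = rnum C d ℓ φ (k - ℓ) := by rw [i2]
  have j3 : finrank ℝ (cocycles C d (k - 1 - ℓ + 1)) = finrank ℝ (cocycles C d (k - ℓ)) := by
    rw [i2]
  have b1 := bnum_le C d k
  have b2 := bnum_le C d (k - ℓ + 1)
  have r1 := rnum_le C d ℓ φ (k - ℓ)
  have r2 := rnum_le C d ℓ φ (k - ℓ + 1)
  have key : bphi C d ℓ φ k + rnum C d ℓ φ (k - ℓ) + rnum C d ℓ φ (k - ℓ + 1) =
      bnum C d k + bnum C d (k - ℓ + 1) := by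
    unfold bphi bnum
    omega
  constructor <;> omega
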